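/- Let E, A, R be h×h real matrices with R invertible, let C be an l×h real matrix, and let λ_min > 0. Set K_z = −(1/(2λ_min))·R⁻ᵀ·Cᵀ. Suppose EᵀR = RᵀE ⪰ 0 and RᵀA + AᵀR − CᵀC ≺ 0. Then for every λ ≥ λ_min: Rᵀ(A + λ·K_z·C) + (A + λ·K_z·C)ᵀR = RᵀA + AᵀR − (λ/λ_min)·CᵀC ⪯ RᵀA + AᵀR − CᵀC ≺ 0; consequently the pair (E, A + λ·K_z·C) is regular, impulse-free, and asymptotically stable. -/

import Mathlib

open Polynomial Matrix

/-- The pencil polynomial `p(X) = det(X·E − A)` of the pair `(E, A)`. -/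
noncomputable def pencil {n : Type*} [Fintype n] [DecidableEq n]
    (E A : Matrix n n ℝ) : Polynomial ℝ :=
  (Matrix.of fun i j => Polynomial.X * Polynomial.C (E i j) - Polynomial.C (A i j)).det

/-- The pair `(E, A)` is regular. -/
def RegularPair {n : Type*} [Fintype n] [DecidableEq n] (E A : Matrix n n ℝ) : Prop :=
  pencil E A ≠ 0

/-- The pair `(E, A)` is impulse-free. -/
def ImpulseFreePair {n : Type*} [Fintype n] [DecidableEq n] (E A : Matrix n n ℝ) : Prop :=
  pencil E A ≠ 0 ∧ (pencil E A).natDegree = E.rank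

/-- The pair `(E, A)` is asymptotically stable. -/
def AsympStablePair {n : Type*} [Fintype n] [DecidableEq n] (E A : Matrix n n ℝ) : Prop :=
  ∀ lam : ℂ, (lam • E.map (Complex.ofReal) - A.map (Complex.ofReal)).det = 0 → lam.re < 0

lemma pencil_eq {n : Type*} [Fintype n] [DecidableEq n] (E A : Matrix n n ℝ) :
    pencil E A = ((X : ℝ[X]) • E.map Polynomial.C - A.map Polynomial.C).det := by
  unfold pencil
  congr 1

lemma pencil_mul {n : Type*} [Fintype n] [DecidableEq n] (P Q E A : Matrix n n ℝ) :
    pencil (P * E * Q) (P * A * Q)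
      = Polynomial.C P.det * pencil E A * Polynomial.C Q.det := by
  rw [pencil_eq, pencil_eq, RingHom.map_det, RingHom.map_det, ← det_mul, ← det_mul]
  congr 1
  simp only [RingHom.mapMatrix_apply, Matrix.map_mul, Matrix.mul_sub, Matrix.sub_mul,
    Matrix.mul_smul, Matrix.smul_mul]

lemma pencil_submatrix {n m : Type*} [Fintype n] [DecidableEq n] [Fintype m] [DecidableEq m]
    (e : m ≃ n) (E A : Matrix n n ℝ) :
    pencil (E.submatrix e e) (A.submatrix e e) = pencil E A := by
  rw [pencil_eq, pencil_eq, ← det_submatrix_equiv_self e]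
  congr 1

lemma pencil_zero {n : Type*} [Fintype n] [DecidableEq n] (A : Matrix n n ℝ) :
    pencil 0 A = Polynomial.C (-A).det := by
  rw [pencil_eq, RingHom.map_det]
  congr 1
  ext i j
  simp

lemma pencil_one {n : Type*} [Fintype n] [DecidableEq n] (A : Matrix n n ℝ) :
    pencil 1 A = A.charpoly := by
  rw [pencil_eq, Matrix.charpoly, charmatrix]
  congr 1
  ext i j
  by_cases hij : i = j <;> simp [hij, Matrix.one_apply]

lemma pencil_block {m k : Type*} [Fintype m] [DecidableEq m] [Fintype k] [DecidableEq k]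
    (d : m → ℝ) (hd : ∀ i, d i ≠ 0) (M11 : Matrix m m ℝ) (M12 : Matrix m k ℝ)
    (M21 : Matrix k m ℝ) (M22 : Matrix k k ℝ) (hM : M22.det ≠ 0) :
    pencil (fromBlocks (diagonal d) 0 0 0) (fromBlocks M11 M12 M21 M22) ≠ 0 ∧
    (pencil (fromBlocks (diagonal d) 0 0 0) (fromBlocks M11 M12 M21 M22)).natDegree
      = Fintype.card m := by
  set K := M11 - M12 * M22⁻¹ * M21
  have hu : IsUnit M22.det := isUnit_iff_ne_zero.mpr hM
  have key := pencil_mul (fromBlocks 1 (-(M12 * M22⁻¹)) 0 1) 1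
    (fromBlocks (diagonal d) 0 0 0) (fromBlocks M11 M12 M21 M22)
  have e1 : fromBlocks 1 (-(M12 * M22⁻¹)) 0 1 * fromBlocks M11 M12 M21 M22
      = fromBlocks K 0 M21 M22 := by
    rw [fromBlocks_multiply]
    simp [K, Matrix.mul_assoc, Matrix.nonsing_inv_mul _ hu, sub_eq_add_neg]
  have e2 : fromBlocks 1 (-(M12 * M22⁻¹)) 0 1 * fromBlocks (diagonal d) 0 0 (0 : Matrix k k ℝ)
      = fromBlocks (diagonal d) 0 0 0 := by
    rw [fromBlocks_multiply]
    simp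
  rw [Matrix.mul_one, Matrix.mul_one, e1, e2] at key
  simp only [det_fromBlocks_zero₂₁, det_one, mul_one, map_one, one_mul] at key
  have e3 : pencil (fromBlocks (diagonal d) 0 0 (0 : Matrix k k ℝ)) (fromBlocks K 0 M21 M22)
      = pencil (diagonal d) K * pencil 0 M22 := by
    rw [pencil_eq, pencil_eq, pencil_eq, ← det_fromBlocks_zero₁₂ _ (-(M21.map Polynomial.C))]
    congr 1
    ext (i | i) (j | j) : 2 <;> simp [-diagonal_map]
  have e4 : pencil (diagonal d) K
      = Polynomial.C (diagonal d).det * (diagonal (fun i => (d i)⁻¹) * K).charpoly := by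
    have := pencil_mul (diagonal d) 1 1 (diagonal (fun i => (d i)⁻¹) * K)
    rw [← Matrix.mul_assoc, diagonal_mul_diagonal] at this
    simpa [hd, pencil_one] using this
  have h1 : (diagonal d).det ≠ 0 := by
    rw [det_diagonal]; exact Finset.prod_ne_zero_iff.mpr fun i _ => hd i
  have h2 : (-M22).det ≠ 0 := by
    rw [det_neg]; exact mul_ne_zero (pow_ne_zero _ (by norm_num)) hM
  rw [← key, e3, e4, pencil_zero]
  have hc := (charpoly_monic (diagonal (fun i => (d i)⁻¹) * K)).ne_zero
  constructor
  · exact mul_ne_zero (mul_ne_zero (C_ne_zero.mpr h1) hc) (C_ne_zero.mpr h2)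
  · rw [natDegree_mul_C h2, natDegree_C_mul h1, charpoly_natDegree_eq_dim]

lemma pencil_diag {n : Type*} [Fintype n] [DecidableEq n] (d : n → ℝ) (M : Matrix n n ℝ)
    (hM : ∀ v : n → ℝ, v ≠ 0 → v ⬝ᵥ M *ᵥ v ≠ 0) :
    pencil (diagonal d) M ≠ 0 ∧
    (pencil (diagonal d) M).natDegree = Fintype.card {i // d i ≠ 0} := by
  let e := Equiv.sumCompl (fun i => d i ≠ 0)
  have hb := pencil_block (fun i : {i // d i ≠ 0} => d i) (fun i => i.2)
    (M.submatrix e e).toBlocks₁₁ (M.submatrix e e).toBlocks₁₂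
    (M.submatrix e e).toBlocks₂₁ (M.submatrix e e).toBlocks₂₂ ?_
  · rw [fromBlocks_toBlocks] at hb
    have : fromBlocks (diagonal (fun i : {i // d i ≠ 0} => d i)) 0 0 0
        = (diagonal d).submatrix e e := by
      rw [submatrix_diagonal_equiv]
      ext (i | i) (j | j)
      · simp [diagonal_apply, e]
      · simp
      · simp
      · have := i.2
        simp only [not_not] at this
        simp [diagonal_apply, e, this]
    rwa [this, pencil_submatrix] at hb
  · intro h0
    obtain ⟨w, hw, hw0⟩ := exists_mulVec_eq_zero_iff.mpr h0
    let u : {i // d i ≠ 0} ⊕ {i // ¬ d i ≠ 0} → ℝ := Sum.elim 0 w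
    refine hM (u ∘ e.symm) ?_ ?_
    · intro hz
      apply hw
      ext i
      have := congrFun hz (e (Sum.inr i))
      simpa [u] using this
    · have : (u ∘ e.symm) ⬝ᵥ M *ᵥ (u ∘ e.symm) = u ⬝ᵥ (M.submatrix e e) *ᵥ u := by
        rw [Matrix.submatrix_mulVec_equiv]
        rw [comp_equiv_symm_dotProduct]
      rw [this, ← fromBlocks_toBlocks (M.submatrix e e), fromBlocks_mulVec]
      have c1 : u ∘ Sum.inl = 0 := rfl
      have c2 : u ∘ Sum.inr = w := rfl
      rw [c1, c2, hw0]
      simp [u]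

lemma posdef_ne {n : Type*} [Fintype n] (N : Matrix n n ℝ)
    (hN : (-(N + Nᵀ)).PosDef) (v : n → ℝ) (hv : v ≠ 0) : v ⬝ᵥ N *ᵥ v < 0 := by
  have := hN.dotProduct_mulVec_pos hv
  simp only [star_trivial, neg_mulVec, add_mulVec, dotProduct_neg, dotProduct_add,
    mulVec_transpose] at this
  rw [dotProduct_comm v (v ᵥ* N), ← dotProduct_mulVec] at this
  linarith

lemma pencil_psd {n : Type*} [Fintype n] [DecidableEq n] (S N : Matrix n n ℝ)
    (hS : S.IsHermitian) (hN : (-(N + Nᵀ)).PosDef) :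
    pencil S N ≠ 0 ∧ (pencil S N).natDegree = S.rank := by
  let U : Matrix n n ℝ := hS.eigenvectorUnitary
  have hU : star U * U = 1 := Unitary.coe_star_mul_self hS.eigenvectorUnitary
  have hU' : U * star U = 1 := Unitary.coe_mul_star_self hS.eigenvectorUnitary
  have hsp : S = U * diagonal hS.eigenvalues * star U := by
    have := hS.spectral_theorem
    rw [Unitary.conjStarAlgAut_apply] at this
    exact this
  have hNN : N = U * (star U * N * U) * star U := by
    calc N = (U * star U) * N * (U * star U) := by rw [hU']; simp
      _ = _ := by simp only [Matrix.mul_assoc]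
  have hd := pencil_diag hS.eigenvalues (star U * N * U) (by
    intro v hv
    have hne : U *ᵥ v ≠ 0 := by
      intro h0
      apply hv
      have : star U *ᵥ (U *ᵥ v) = v := by rw [mulVec_mulVec, hU, one_mulVec]
      rw [← this, h0, mulVec_zero]
    have := posdef_ne N hN _ hne
    rw [← mulVec_mulVec, ← mulVec_mulVec, dotProduct_mulVec, star_eq_conjTranspose,
      conjTranspose_eq_transpose_of_trivial, vecMul_transpose]
    exact this.ne)
  have hk := pencil_mul U (star U) (diagonal hS.eigenvalues) (star U * N * U)
  rw [← hsp, ← hNN] at hk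
  have h1 : U.det * (star U).det = 1 := by rw [← det_mul, hU', det_one]
  have h2 : pencil S N = pencil (diagonal hS.eigenvalues) (star U * N * U) := by
    rw [hk, mul_right_comm, ← map_mul, h1]; simp
  rw [h2, hS.rank_eq_card_non_zero_eigs]
  exact hd

lemma stable_psd {n : Type*} [Fintype n] [DecidableEq n] (S N : Matrix n n ℝ)
    (hS : S.PosSemidef) (hN : (-(N + Nᵀ)).PosDef) (s : ℂ)
    (hs : (s • S.map Complex.ofReal - N.map Complex.ofReal).det = 0) : s.re < 0 := by
  obtain ⟨v, hv, hv0⟩ := exists_mulVec_eq_zero_iff.mpr hs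
  let a : n → ℝ := fun i => (v i).re
  let b : n → ℝ := fun i => (v i).im
  have hre : ∀ (T : Matrix n n ℝ) i, ((T.map Complex.ofReal *ᵥ v) i).re = (T *ᵥ a) i := by
    intro T i; simp [mulVec, dotProduct, a]
  have him : ∀ (T : Matrix n n ℝ) i, ((T.map Complex.ofReal *ᵥ v) i).im = (T *ᵥ b) i := by
    intro T i; simp [mulVec, dotProduct, b]
  have heq : ∀ i, s * (S.map Complex.ofReal *ᵥ v) i = (N.map Complex.ofReal *ᵥ v) i := by
    intro i
    have := congrFun hv0 i
    rw [sub_mulVec, smul_mulVec] at this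
    simpa [sub_eq_zero] using this
  have ha : N *ᵥ a = s.re • (S *ᵥ a) - s.im • (S *ᵥ b) := by
    ext i
    have := congrArg Complex.re (heq i)
    rw [Complex.mul_re, hre, him, hre] at this
    simp [← this]
  have hb : N *ᵥ b = s.re • (S *ᵥ b) + s.im • (S *ᵥ a) := by
    ext i
    have := congrArg Complex.im (heq i)
    rw [Complex.mul_im, hre, him, him] at this
    simp [← this]
  have hsym : b ⬝ᵥ S *ᵥ a = a ⬝ᵥ S *ᵥ b := by
    have h1 : Sᵀ = S := by
      have := hS.isHermitian.eq
      rwa [conjTranspose_eq_transpose_of_trivial] at this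
    rw [dotProduct_comm, dotProduct_mulVec, ← mulVec_transpose, h1] 
  have hsa := hS.dotProduct_mulVec_nonneg a
  have hsb := hS.dotProduct_mulVec_nonneg b
  simp only [star_trivial] at hsa hsb
  have hle : ∀ x : n → ℝ, x ⬝ᵥ N *ᵥ x ≤ 0 := by
    intro x
    by_cases hx : x = 0
    · simp [hx]
    · exact (posdef_ne N hN x hx).le
  have hlt : a ⬝ᵥ N *ᵥ a + b ⬝ᵥ N *ᵥ b < 0 := by
    by_cases hx : a = 0
    · have hb0 : b ≠ 0 := by
        intro hb0
        apply hv
        ext i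
        exact Complex.ext (congrFun hx i) (congrFun hb0 i)
      linarith [hle a, posdef_ne N hN b hb0]
    · linarith [hle b, posdef_ne N hN a hx]
  rw [ha, hb] at hlt
  simp only [dotProduct_add, dotProduct_sub, dotProduct_smul, smul_eq_mul, hsym] at hlt
  by_contra hcon
  push Not at hcon
  nlinarith [mul_nonneg hcon hsa, mul_nonneg hcon hsb]

theorem stmt9 (h l : ℕ) (E A R : Matrix (Fin h) (Fin h) ℝ) (hR : IsUnit R.det)
    (C : Matrix (Fin l) (Fin h) ℝ) (lmin : ℝ) (hlmin : 0 < lmin)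
    (Kz : Matrix (Fin h) (Fin l) ℝ)
    (hKz : Kz = -(1 / (2 * lmin)) • ((R⁻¹)ᵀ * Cᵀ))
    (h1 : Eᵀ * R = Rᵀ * E) (h2 : (Eᵀ * R).PosSemidef)
    (h3 : (-(Rᵀ * A + Aᵀ * R - Cᵀ * C)).PosDef) :
    ∀ lam : ℝ, lmin ≤ lam →
      (Rᵀ * (A + lam • (Kz * C)) + (A + lam • (Kz * C))ᵀ * R
          = Rᵀ * A + Aᵀ * R - (lam / lmin) • (Cᵀ * C)) ∧
      ((Rᵀ * A + Aᵀ * R - Cᵀ * C)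
          - (Rᵀ * A + Aᵀ * R - (lam / lmin) • (Cᵀ * C))).PosSemidef ∧
      (-(Rᵀ * A + Aᵀ * R - (lam / lmin) • (Cᵀ * C))).PosDef ∧
      RegularPair E (A + lam • (Kz * C)) ∧
      ImpulseFreePair E (A + lam • (Kz * C)) ∧
      AsympStablePair E (A + lam • (Kz * C)) := by
  intro lam hlam
  have hRK : Rᵀ * Kz = -(1 / (2 * lmin)) • Cᵀ := by
    rw [hKz, Matrix.mul_smul, ← Matrix.mul_assoc, ← transpose_mul,
      Matrix.nonsing_inv_mul _ hR, transpose_one, Matrix.one_mul]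
  have hKR : Kzᵀ * R = -(1 / (2 * lmin)) • C := by
    have := congrArg transpose hRK
    simpa only [transpose_mul, transpose_transpose, transpose_smul] using this
  have g1 : Rᵀ * (A + lam • (Kz * C)) + (A + lam • (Kz * C))ᵀ * R
          = Rᵀ * A + Aᵀ * R - (lam / lmin) • (Cᵀ * C) := by
    have e1 : Rᵀ * (Kz * C) = -(1 / (2 * lmin)) • (Cᵀ * C) := by
      rw [← Matrix.mul_assoc, hRK, Matrix.smul_mul]
    have e2 : (Kz * C)ᵀ * R = -(1 / (2 * lmin)) • (Cᵀ * C) := by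
      rw [transpose_mul, Matrix.mul_assoc, hKR, Matrix.mul_smul]
    rw [Matrix.mul_add, transpose_add, Matrix.add_mul, Matrix.mul_smul, transpose_smul,
      Matrix.smul_mul, e1, e2]
    ext i j
    simp only [Matrix.add_apply, Matrix.sub_apply, Matrix.smul_apply, smul_eq_mul]
    field_simp
    ring
  have g2 : ((Rᵀ * A + Aᵀ * R - Cᵀ * C)
          - (Rᵀ * A + Aᵀ * R - (lam / lmin) • (Cᵀ * C))).PosSemidef := by
    have e : (Rᵀ * A + Aᵀ * R - Cᵀ * C) - (Rᵀ * A + Aᵀ * R - (lam / lmin) • (Cᵀ * C))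
        = (lam / lmin - 1) • (Cᵀ * C) := by
      rw [sub_smul, one_smul]; abel
    rw [e]
    have hc : (Cᵀ * C).PosSemidef := by
      have := posSemidef_conjTranspose_mul_self C
      rwa [conjTranspose_eq_transpose_of_trivial] at this
    refine hc.smul ?_
    rw [sub_nonneg, le_div_iff₀ hlmin]; linarith
  have g3 : (-(Rᵀ * A + Aᵀ * R - (lam / lmin) • (Cᵀ * C))).PosDef := by
    have := h3.add_posSemidef g2
    convert this using 1
    abel
  set F := A + lam • (Kz * C)
  have hN : (-(Rᵀ * F + (Rᵀ * F)ᵀ)).PosDef := by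
    rw [transpose_mul, transpose_transpose, g1]; exact g3
  rw [h1] at h2
  have hp := pencil_psd (Rᵀ * E) (Rᵀ * F) h2.isHermitian hN
  have hk := pencil_mul Rᵀ 1 E F
  simp only [Matrix.mul_one, det_one, map_one, mul_one, det_transpose] at hk
  have hR0 : R.det ≠ 0 := hR.ne_zero
  rw [hk, natDegree_C_mul hR0,
    rank_mul_eq_right_of_isUnit_det Rᵀ E (by rwa [det_transpose])] at hp
  have hne : pencil E F ≠ 0 := right_ne_zero_of_mul hp.1
  refine ⟨g1, g2, g3, hne, ⟨hne, hp.2⟩, ?_⟩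
  intro s hs
  refine stable_psd (Rᵀ * E) (Rᵀ * F) h2 hN s ?_
  have : s • (Rᵀ * E).map Complex.ofReal - (Rᵀ * F).map Complex.ofReal
      = Rᵀ.map Complex.ofReal * (s • E.map Complex.ofReal - F.map Complex.ofReal) := by
    have hm : ∀ T : Matrix (Fin h) (Fin h) ℝ, (Rᵀ * T).map Complex.ofReal
        = Rᵀ.map Complex.ofReal * T.map Complex.ofReal := by
      intro T
      exact Matrix.map_mul (f := Complex.ofRealHom)
    rw [hm, hm, Matrix.mul_sub, Matrix.mul_smul]
  rw [this, det_mul, hs, mul_zero]
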